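/- arXiv:2107.02379 — 3 statements merged into one kernel-verified Lean document; each statement's English description precedes it below -/
import Mathlib

section
/- Let A ⊆ N^n_{2d} be an exponent set whose correlative sparsity graph has maximal cliques J_1,…,J_t, and let B ⊆ N^n_d be an exponent set such that every β ∈ B satisfies nnz(β) ⊆ J_k for some k. Define the graph G(B, E_csp) with vertex set B and edge set E_csp = {(β,γ) ∈ B×B : for all distinct i,j ∈ {1,…,n}, (β_i+γ_i)(β_j+γ_j) > 0 implies (i,j) is an edge of the csp graph of A}. Then: (i) each set C_k := {β ∈ B : nnz(β) ⊆ J_k} is a clique of G(B,E_csp), and every maximal clique of G(B,E_csp) equals C_k for some k ∈ {1,…,t}; (ii) if the csp graph of A is chordal, then G(B,E_csp) is chordal. -/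
/-!
Part (i) only uses that distinct `i`, `j` in the union of the supports of a clique of
`G(B, E_csp)` are adjacent in the csp graph, so that this union extends to some `J k`.

Part (ii) rests on Dirac's theorem that a finite chordal graph has a simplicial vertex, one whose
closed neighbourhood is a clique (`exists_simplicial_of_not_adj`). Given a cycle `β_0, …, β_{m-1}`
of `G(B, E_csp)` with `m ≥ 4`, pick a vertex `v` that is simplicial in the subgraph of the csp graph
induced by the union `U` of the supports of the `β_i`, and an `i` with `v ∈ nnz β_i`. The supports
of `β_{i-1}` and `β_{i+1}` lie in the closed neighbourhood of `v` in `U`, which is a clique, so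
`β_{i-1}` and `β_{i+1}` are adjacent: this is a chord.

Dirac's theorem is proved in the stronger form that for non-adjacent `v, c₀ ∈ U` there is a
simplicial vertex of `U` outside the closed neighbourhood of `v`. Let `C` be the component of `c₀`
in `U` minus the closed neighbourhood of `v`, and `N` the closed neighbourhood of `C` in `U`.
The vertices of `N` adjacent to `v` form a clique: two non-adjacent ones would be joined by a
shortest path with interior in `C`, which closes up through `v` to a chordless cycle
(`adj_of_walk`). Since `v ∉ N`, induction applies to `N`, and a vertex of `C` that is simplicial in
`N` is simplicial in `U`.
-/

open Finset

/-- A clique (as a set of vertices): pairwise adjacent vertices. -/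
def IsCliqueSet {V : Type*} (E : V → V → Prop) (C : Set V) : Prop :=
  ∀ i ∈ C, ∀ j ∈ C, E i j

/-- A maximal clique (as a set of vertices). -/
def IsMaximalCliqueSet {V : Type*} (E : V → V → Prop) (C : Set V) : Prop :=
  IsCliqueSet E C ∧ ∀ D : Set V, IsCliqueSet E D → C ⊆ D → D = C

/-- Chordality: every cycle of length at least 4 has a chord. -/
def IsChordalRel {V : Type*} (E : V → V → Prop) : Prop :=
  ∀ (k : ℕ) (c : Fin (k + 4) → V), Function.Injective c →
    (∀ i, E (c i) (c (i + 1))) →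
    ∃ i j : Fin (k + 4), i ≠ j ∧ j ≠ i + 1 ∧ i ≠ j + 1 ∧ E (c i) (c j)

/-- Adjacency of distinct vertices in the correlative sparsity graph of the exponent set
`A`: `i` and `j` are joined iff some `α ∈ A` has `α i, α j > 0`. -/
def cspAdj {n : ℕ} (A : Finset (Fin n → ℕ)) : Fin n → Fin n → Prop :=
  fun i j => ∃ a ∈ A, 0 < a i ∧ 0 < a j

/-- The edge relation of the csp graph of `A` (with a self-loop at every vertex). -/
def cspE {n : ℕ} (A : Finset (Fin n → ℕ)) : Fin n → Fin n → Prop :=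
  fun i j => i = j ∨ cspAdj A i j

/-- The edge relation `E_csp` of the graph `G(B, E_csp)` on the exponent set `B`:
`(β,γ)` is an edge iff for all distinct `i, j`, `(β i + γ i)(β j + γ j) > 0` implies that
`(i,j)` is an edge of the csp graph of `A`. -/
def liftedCspE {n : ℕ} (A B : Finset (Fin n → ℕ)) :
    {b // b ∈ B} → {b // b ∈ B} → Prop :=
  fun β γ => ∀ i j : Fin n, i ≠ j → 0 < β.1 i + γ.1 i → 0 < β.1 j + γ.1 j → cspAdj A i j

/-- The candidate clique `C_k = {β ∈ B : nnz(β) ⊆ J_k}` of `G(B, E_csp)`. -/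
def liftedClique {n : ℕ} (B : Finset (Fin n → ℕ)) (J : Set (Fin n)) : Set {b // b ∈ B} :=
  {β | ∀ i, 0 < β.1 i → i ∈ J}

/-! ### Walks in chordal graphs -/

lemma val_add_one_fin (k : ℕ) (i : Fin (k + 4)) :
    (i + 1).val = if i.val = k + 3 then 0 else i.val + 1 := by
  rw [Fin.val_add_one]
  simp [Fin.ext_iff]

/-- `p 0, …, p l` is a walk from `s` to `t` whose interior vertices lie in `W`. Values of `p`
beyond `l` are irrelevant. -/
def IsWalkThrough {V : Type*} (E : V → V → Prop) (W : Set V) (s t : V) (l : ℕ) (p : ℕ → V) :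
    Prop :=
  p 0 = s ∧ p l = t ∧ (∀ m < l, E (p m) (p (m + 1))) ∧ ∀ m, 0 < m → m < l → p m ∈ W

/-- If `p i` and `p j` are adjacent, the part of the walk between them can be cut out. -/
lemma IsWalkThrough.shortcut {V : Type*} {E : V → V → Prop} {W : Set V} {s t : V} {l : ℕ}
    {p : ℕ → V} (h : IsWalkThrough E W s t l p) {i j : ℕ} (hij : i < j) (hj : j ≤ l)
    (hE : E (p i) (p j)) :
    ∃ q, IsWalkThrough E W s t (l - (j - i - 1)) q := by
  obtain ⟨h0, hl, hs, hW⟩ := h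
  refine ⟨fun m => if m ≤ i then p m else p (m + (j - i - 1)), ?_, ?_, ?_, ?_⟩
  · simp [h0]
  · have h1 : ¬ (l - (j - i - 1) ≤ i) := by omega
    have h2 : l - (j - i - 1) + (j - i - 1) = l := by omega
    simp only [h1, if_false, h2, hl]
  · intro m hm
    rcases lt_trichotomy m i with h | h | h
    · have h1 : m ≤ i := by omega
      have h2 : m + 1 ≤ i := by omega
      simp only [h1, h2, if_true]
      exact hs m (by omega)
    · subst h
      have h2 : ¬ (m + 1 ≤ m) := by omega
      have h3 : m + 1 + (j - m - 1) = j := by omega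
      simpa only [le_refl, h2, if_true, if_false, h3] using hE
    · have h1 : ¬ (m ≤ i) := by omega
      have h2 : ¬ (m + 1 ≤ i) := by omega
      have h3 : m + 1 + (j - i - 1) = m + (j - i - 1) + 1 := by omega
      simp only [h1, h2, if_false, h3]
      exact hs _ (by omega)
  · intro m hm hm'
    by_cases h1 : m ≤ i
    · simp only [h1, if_true]
      exact hW m hm (by omega)
    · simp only [h1, if_false]
      exact hW _ (by omega) (by omega)

/-- In a chordal graph, if `s` and `t` are neighbours of `v` joined by a walk whose interior
avoids the closed neighbourhood of `v`, then `s` and `t` are adjacent. -/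
lemma adj_of_walk {V : Type*} {E : V → V → Prop} (hrefl : ∀ a, E a a)
    (hsymm : ∀ a b, E a b → E b a) (hch : IsChordalRel E) {W : Set V} {v s t : V}
    (hW : ∀ w ∈ W, ¬ E v w) (hs : E v s) (ht : E v t)
    (hwalk : ∃ l p, IsWalkThrough E W s t l p) : E s t := by
  classical
  by_contra hst
  -- a shortest walk; it is an induced path, so closing it up through `v` gives a chordless cycle
  obtain ⟨p, hp⟩ := Nat.find_spec hwalk
  have hmin : ∀ m < Nat.find hwalk, ∀ q, ¬ IsWalkThrough E W s t m q :=
    fun m hm q hq => Nat.find_min hwalk hm ⟨q, hq⟩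
  generalize Nat.find hwalk = l at hp hmin
  have hp' := hp
  obtain ⟨h0, hl, hstep, hint⟩ := hp'
  have hl2 : 2 ≤ l := by
    by_contra h
    have : l = 0 ∨ l = 1 := by omega
    rcases this with rfl | rfl
    · exact hst (by rw [← h0, ← hl]; exact hrefl _)
    · exact hst (by rw [← h0, ← hl]; exact hstep 0 (by omega))
  obtain ⟨k, rfl⟩ : ∃ k, l = k + 2 := ⟨l - 2, by omega⟩
  have hchord : ∀ i j, i + 1 < j → j ≤ k + 2 → ¬ E (p i) (p j) := by
    intro i j hij hj hE
    obtain ⟨q, hq⟩ := hp.shortcut (by omega) hj hE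
    exact hmin _ (by omega) q hq
  have hsv : s ≠ v := by rintro rfl; exact hst ht
  have htv : t ≠ v := by rintro rfl; exact hst (hsymm _ _ hs)
  have hne : ∀ i j, i < j → j ≤ k + 2 → p i ≠ p j := by
    intro i j hij hj he
    rcases Nat.lt_or_ge j (k + 2) with h | h
    · exact hchord i (j + 1) (by omega) (by omega) (he ▸ hstep j h)
    · obtain rfl : j = k + 2 := by omega
      rcases Nat.eq_zero_or_pos i with rfl | hi
      · exact hst (by rw [← h0, ← hl, ← he]; exact hrefl _)
      · -- the interior vertex `p i` equals `t`, which is adjacent to `v`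
        exact hW _ (hint i hi hij) (by rw [he, hl]; exact ht)
  have hpv : ∀ i, i ≤ k + 2 → p i ≠ v := by
    intro i hi he
    rcases Nat.eq_zero_or_pos i with rfl | h
    · exact hsv (h0 ▸ he)
    · rcases Nat.lt_or_ge i (k + 2) with h' | h'
      · exact hW _ (hint i h h') (by rw [he]; exact hrefl _)
      · obtain rfl : i = k + 2 := by omega
        exact htv (hl ▸ he)
  obtain ⟨c, hc⟩ : ∃ c : Fin (k + 4) → V,
      ∀ i, c i = if i.val ≤ k + 2 then p i.val else v := ⟨_, fun _ => rfl⟩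
  have hsucc := val_add_one_fin k
  have hcinj : Function.Injective c := by
    intro i j hij
    rw [hc, hc] at hij
    have hi := i.isLt
    have hj := j.isLt
    apply Fin.ext
    split_ifs at hij with h1 h2 h2
    · rcases lt_trichotomy i.val j.val with h | h | h
      · exact absurd hij (hne _ _ h h2)
      · exact h
      · exact absurd hij.symm (hne _ _ h h1)
    · exact absurd hij (hpv _ h1)
    · exact absurd hij.symm (hpv _ h2)
    · omega
  have hcstep : ∀ i, E (c i) (c (i + 1)) := by
    intro i
    have hi := i.isLt
    rw [hc, hc, hsucc]
    by_cases h : i.val = k + 3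
    · simp only [h, if_true]
      simpa [h0] using hs
    · by_cases h' : i.val = k + 2
      · simp only [h']
        simpa [hl] using hsymm _ _ ht
      · have h1 : i.val ≤ k + 2 := by omega
        have h2 : i.val + 1 ≤ k + 2 := by omega
        simp only [h, h1, h2, if_true, if_false]
        exact hstep _ (by omega)
  obtain ⟨i, j, hij, hji, hij', hE⟩ := hch k c hcinj hcstep
  have key : ∀ i j : Fin (k + 4), i.val < j.val → j ≠ i + 1 → i ≠ j + 1 → ¬ E (c i) (c j) := by
    intro i j hlt h1 h2 hE
    have hi := i.isLt
    have hj := j.isLt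
    rw [Ne, Fin.ext_iff, hsucc] at h1 h2
    rw [hc, hc] at hE
    have hi' : i.val ≤ k + 2 := by omega
    rw [if_pos hi'] at hE
    split_ifs at hE h1 h2 with h3
    all_goals first
      | omega
      | exact hchord _ _ (by omega) h3 hE
      | exact hW _ (hint i.val (by omega) (by omega)) (hsymm _ _ hE)
  rcases lt_trichotomy i.val j.val with h | h | h
  · exact key i j h hji hij' hE
  · exact hij (Fin.ext h)
  · exact key j i h hij' hji (hsymm _ _ hE)

/-- A chain of adjacent vertices of `W` from `a` to `b`, prolonged by a neighbour `s` of `a` and a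
neighbour `t` of `b`, is a walk from `s` to `t` with interior in `W`. -/
lemma exists_walk_of_chain {V : Type*} {E : V → V → Prop} {W : Set V} {s a b t : V}
    (ha : a ∈ W) (hsa : E s a)
    (hab : Relation.ReflTransGen (fun x y => x ∈ W ∧ y ∈ W ∧ E x y) a b) (hbt : E b t) :
    ∃ l p, IsWalkThrough E W s t l p := by
  induction hab generalizing t with
  | refl =>
    refine ⟨2, fun m => if m = 0 then s else if m = 1 then a else t, by simp, by simp, ?_, ?_⟩
    · intro m hm
      interval_cases m <;> simp [hsa, hbt]
    · intro m hm hm'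
      interval_cases m
      simpa using ha
  | @tail b c _ hbc ih =>
    obtain ⟨l, p, h0, hl, hs, hi⟩ := ih hbc.2.2
    refine ⟨l + 1, fun m => if m ≤ l then p m else t, by simp [h0], by simp, ?_, ?_⟩
    · intro m hm
      rcases Nat.lt_or_ge m l with h | h
      · have h1 : m ≤ l := by omega
        have h2 : m + 1 ≤ l := by omega
        simp only [h1, h2, if_true]
        exact hs m h
      · obtain rfl : m = l := by omega
        simpa [hl] using hbt
    · intro m hm hm'
      have h1 : m ≤ l := by omega
      simp only [h1, if_true]
      rcases Nat.lt_or_ge m l with h | h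
      · exact hi m hm h
      · obtain rfl : m = l := by omega
        rw [hl]
        exact hbc.2.1

/-! ### Simplicial vertices -/

/-- Dirac's theorem for the induced subgraph on a finite vertex set `U`: if `v` is not adjacent to
all of `U`, some simplicial vertex of `U` is not adjacent to `v`. As `E` is reflexive, `{u | E v u}`
is the closed neighbourhood of `v`. -/
lemma exists_simplicial_of_not_adj {V : Type*} {E : V → V → Prop} (hrefl : ∀ a, E a a)
    (hsymm : ∀ a b, E a b → E b a) (hch : IsChordalRel E) (U : Finset V) :
    ∀ v ∈ U, ∀ c₀ ∈ U, ¬ E v c₀ →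
      ∃ w ∈ U, ¬ E v w ∧ ∀ a ∈ U, ∀ b ∈ U, E w a → E w b → E a b := by
  classical
  induction U using Finset.strongInduction with
  | H U ih =>
  intro v hv c₀ hc₀ hvc
  let W : Set V := {u | u ∈ U ∧ ¬ E v u}
  let r : V → V → Prop := fun x y => x ∈ W ∧ y ∈ W ∧ E x y
  have hr : Std.Symm (Relation.ReflTransGen r) :=
    
    have : Std.Symm r := ⟨fun x y h => ⟨h.2.1, h.1, hsymm _ _ h.2.2⟩⟩
    Relation.ReflTransGen.stdSymm
  let C : Set V := {w | Relation.ReflTransGen r c₀ w}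
  have hCW : ∀ w ∈ C, w ∈ W := by
    intro w hw
    rcases Relation.ReflTransGen.cases_tail hw with h | ⟨x, -, h⟩
    · exact h ▸ ⟨hc₀, hvc⟩
    · exact h.2.1
  let N : Finset V := U.filter fun u => ∃ c ∈ C, E c u
  have hmemN : ∀ u, u ∈ N ↔ u ∈ U ∧ ∃ c ∈ C, E c u := fun u => Finset.mem_filter
  have hNU : N ⊂ U := by
    refine Finset.ssubset_iff_subset_ne.2 ⟨Finset.filter_subset _ _, fun h => ?_⟩
    obtain ⟨-, c, hc, hcv⟩ := (hmemN v).1 (h ▸ hv)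
    exact (hCW c hc).2 (hsymm _ _ hcv)
  have hc₀C : c₀ ∈ C := Relation.ReflTransGen.refl
  have hc₀N : c₀ ∈ N := (hmemN _).2 ⟨hc₀, c₀, hc₀C, hrefl _⟩
  have hNC : ∀ w ∈ N, ¬ E v w → w ∈ C := by
    intro w hw hvw
    obtain ⟨hwU, c, hc, hcw⟩ := (hmemN w).1 hw
    exact Relation.ReflTransGen.tail hc ⟨hCW c hc, ⟨hwU, hvw⟩, hcw⟩
  -- the neighbours of `v` in `N` form a clique
  have hclique : ∀ s ∈ N, ∀ t ∈ N, E v s → E v t → E s t := by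
    intro s hs t ht hvs hvt
    obtain ⟨-, a, ha, has⟩ := (hmemN s).1 hs
    obtain ⟨-, b, hb, hbt⟩ := (hmemN t).1 ht
    exact adj_of_walk hrefl hsymm hch (W := W) (fun w hw => hw.2) hvs hvt
      (exists_walk_of_chain (hCW a ha) (hsymm _ _ has) ((hr.symm _ _ ha).trans hb) hbt)
  suffices h : ∃ w ∈ N, ¬ E v w ∧ ∀ a ∈ N, ∀ b ∈ N, E w a → E w b → E a b by
    obtain ⟨w, hw, hvw, hsimp⟩ := h
    have hwC := hNC w hw hvw
    refine ⟨w, hNU.1 hw, hvw, fun a ha b hb hwa hwb => ?_⟩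
    exact hsimp a ((hmemN a).2 ⟨ha, w, hwC, hwa⟩) b ((hmemN b).2 ⟨hb, w, hwC, hwb⟩) hwa hwb
  by_cases hcl : ∀ a ∈ N, ∀ b ∈ N, E a b
  · exact ⟨c₀, hc₀N, hvc, fun a ha b hb _ _ => hcl a ha b hb⟩
  · push Not at hcl
    obtain ⟨a, ha, b, hb, hab⟩ := hcl
    obtain ⟨w, hw, haw, hsimp⟩ := ih N hNU a ha b hb hab
    by_cases hvw : E v w
    · -- a simplicial vertex not adjacent to `w` lies outside the clique of neighbours of `v`
      obtain ⟨w', hw', hww', hsimp'⟩ := ih N hNU w hw a ha fun h => haw (hsymm _ _ h)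
      exact ⟨w', hw', fun h => hww' (hclique w hw w' hw' hvw h), hsimp'⟩
    · exact ⟨w, hw, hvw, hsimp⟩

lemma exists_simplicial {V : Type*} {E : V → V → Prop} (hrefl : ∀ a, E a a)
    (hsymm : ∀ a b, E a b → E b a) (hch : IsChordalRel E) (U : Finset V) (hU : U.Nonempty) :
    ∃ w ∈ U, ∀ a ∈ U, ∀ b ∈ U, E w a → E w b → E a b := by
  by_cases hcl : ∀ a ∈ U, ∀ b ∈ U, E a b
  · obtain ⟨w, hw⟩ := hU
    exact ⟨w, hw, fun a ha b hb _ _ => hcl a ha b hb⟩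
  · push Not at hcl
    obtain ⟨a, ha, b, hb, hab⟩ := hcl
    obtain ⟨w, hw, -, h⟩ := exists_simplicial_of_not_adj hrefl hsymm hch U a ha b hb hab
    exact ⟨w, hw, h⟩

/-! ### The lifted correlative sparsity graph -/

lemma exists_maximalCliqueSet_superset {V : Type*} [Finite V] {E : V → V → Prop} {D : Set V}
    (hD : IsCliqueSet E D) : ∃ M, D ⊆ M ∧ IsMaximalCliqueSet E M := by
  obtain ⟨M, hDM, hM⟩ := (Set.toFinite {M : Set V | IsCliqueSet E M}).exists_le_maximal hD
  exact ⟨M, hDM, hM.prop, fun D' hD' h => (hM.le_of_ge hD' h).antisymm h⟩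

lemma cspAdj_symm {n : ℕ} {A : Finset (Fin n → ℕ)} {i j : Fin n} (h : cspAdj A i j) :
    cspAdj A j i := by
  obtain ⟨a, ha, hi, hj⟩ := h
  exact ⟨a, ha, hj, hi⟩

lemma cspE_symm {n : ℕ} {A : Finset (Fin n → ℕ)} {i j : Fin n} (h : cspE A i j) : cspE A j i :=
  h.imp Eq.symm cspAdj_symm

lemma isChordalRel_liftedCspE {n : ℕ} (A B : Finset (Fin n → ℕ)) (hch : IsChordalRel (cspE A)) :
    IsChordalRel (liftedCspE A B) := by
  classical
  intro k c _ hstep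
  let U : Finset (Fin n) := Finset.univ.filter fun x => ∃ i, 0 < (c i).1 x
  have hmemU : ∀ x, x ∈ U ↔ ∃ i, 0 < (c i).1 x := fun x => by simp [U]
  suffices h : ∃ j, liftedCspE A B (c j) (c (j + 1 + 1)) by
    obtain ⟨j, hj⟩ := h
    have hj' := j.isLt
    have h1 := val_add_one_fin k j
    have h2 := val_add_one_fin k (j + 1)
    have h3 := val_add_one_fin k (j + 1 + 1)
    refine ⟨j, j + 1 + 1, ?_, ?_, ?_, hj⟩ <;>
    · rw [Ne, Fin.ext_iff]
      split_ifs at h1 h2 h3 <;> omega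
  rcases U.eq_empty_or_nonempty with hU | hU
  · refine ⟨0, fun x y _ hx _ => ?_⟩
    have hx' : x ∈ U := by
      rcases Nat.add_pos_iff_pos_or_pos.1 hx with h | h <;> exact (hmemU x).2 ⟨_, h⟩
    simp [hU] at hx'
  · obtain ⟨v, hv, hsimp⟩ :=
      exists_simplicial (E := cspE A) (fun a => Or.inl rfl) (fun a b => cspE_symm) hch U hU
    obtain ⟨i, hi⟩ := (hmemU v).1 hv
    obtain ⟨j, rfl⟩ : ∃ j, i = j + 1 := ⟨i - 1, by simp⟩
    refine ⟨j, fun x y hxy hx hy => ?_⟩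
    have key : ∀ x, 0 < (c j).1 x + (c (j + 1 + 1)).1 x → x ∈ U ∧ cspE A v x := by
      intro x hx
      rcases Nat.add_pos_iff_pos_or_pos.1 hx with h | h
      · refine ⟨(hmemU x).2 ⟨_, h⟩, or_iff_not_imp_left.2 fun hvx => ?_⟩
        exact hstep j v x hvx (by omega) (by omega)
      · refine ⟨(hmemU x).2 ⟨_, h⟩, or_iff_not_imp_left.2 fun hvx => ?_⟩
        exact hstep (j + 1) v x hvx (by omega) (by omega)
    exact (hsimp x (key x hx).1 y (key y hy).1 (key x hx).2 (key y hy).2).resolve_left hxy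

/-- **Structure of the lifted correlative-sparsity graph.** If the csp graph of the support
set `A ⊆ N^n_{2d}` has maximal cliques `J 1, …, J t`, and every `β ∈ B ⊆ N^n_d` satisfies
`nnz β ⊆ J k` for some `k`, then (i) each `C_k := {β ∈ B : nnz β ⊆ J k}` is a clique of
`G(B, E_csp)` and every maximal clique of `G(B, E_csp)` equals some `C_k`; (ii) if the csp
graph of `A` is chordal, so is `G(B, E_csp)`. -/
theorem lifted_csp_cliques {n d t : ℕ} (A : Finset (Fin n → ℕ))
    (hA : ∀ a ∈ A, ∑ i, a i ≤ 2 * d)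
    (J : Fin t → Set (Fin n)) (hJinj : Function.Injective J)
    (hJmax : ∀ k, IsMaximalCliqueSet (cspE A) (J k))
    (hJall : ∀ D : Set (Fin n), IsMaximalCliqueSet (cspE A) D → ∃ k, J k = D)
    (B : Finset (Fin n → ℕ)) (hB : ∀ b ∈ B, ∑ i, b i ≤ d)
    (hBJ : ∀ b ∈ B, ∃ k, ∀ i, 0 < b i → i ∈ J k) :
    ((∀ k, IsCliqueSet (liftedCspE A B) (liftedClique B (J k))) ∧
      (∀ D : Set {b // b ∈ B}, IsMaximalCliqueSet (liftedCspE A B) D →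
        ∃ k, D = liftedClique B (J k))) ∧
    (IsChordalRel (cspE A) → IsChordalRel (liftedCspE A B)) := by
  have hclique : ∀ k, IsCliqueSet (liftedCspE A B) (liftedClique B (J k)) := by
    intro k β hβ γ hγ i j hij hi hj
    have hmem : ∀ x, 0 < β.1 x + γ.1 x → x ∈ J k := fun x hx =>
      (Nat.add_pos_iff_pos_or_pos.1 hx).elim (hβ x) (hγ x)
    exact ((hJmax k).1 i (hmem i hi) j (hmem j hj)).resolve_left hij
  refine ⟨⟨hclique, fun D hD => ?_⟩, isChordalRel_liftedCspE A B⟩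
  have hU : IsCliqueSet (cspE A) {i | ∃ β ∈ D, 0 < β.1 i} := by
    rintro i ⟨β, hβ, hi⟩ j ⟨γ, hγ, hj⟩
    exact or_iff_not_imp_left.2 fun hij => hD.1 β hβ γ hγ i j hij (by omega) (by omega)
  obtain ⟨M, hUM, hM⟩ := exists_maximalCliqueSet_superset hU
  obtain ⟨k, rfl⟩ := hJall M hM
  exact ⟨k, (hD.2 _ (hclique k) fun β hβ i hi => hUM ⟨β, hβ, hi⟩).symm⟩
end

section
/- (Putinar's Positivstellensatz) Let g_1,…,g_m be real polynomials in x = (x_1,…,x_n) such that the basic semialgebraic set K = {x ∈ R^n : g_1(x) ≥ 0, …, g_m(x) ≥ 0} satisfies the Archimedean condition, and let f be a polynomial with f(x) > 0 for every x ∈ K. Then there exist SOS polynomials σ_0, σ_1, …, σ_m such that f = σ_0 + Σ_{i=1}^m g_i σ_i identically. -/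
/-!
The proof is algebraic and goes through maximal quadratic modules. The set
`putinarModule g = {σ₀ + ∑ i, g i * σ i}` is a quadratic module `M`, and the Archimedean
condition bounds each `X j`, hence every polynomial, by a constant modulo `M`
(`putinarModule_archimedean`).

Suppose `-1` does not lie in `M - f Σ`, where `Σ` is the set of sums of squares. By Zorn's lemma
there is a maximal proper quadratic module `Q ⊇ M - f Σ`, and maximality forces `Q ∪ -Q` to be
everything (`exists_total`). For such an Archimedean total `Q`, every polynomial `a` is within an
infinitesimal of a unique real number. Infinitesimals are closed under products because
`(1 - a)² (ε + a) + (1 + a)² (ε - a) = 2 ε (1 + a²) - 4 a²`. So "standard part" is a ring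
homomorphism, i.e. evaluation at a point `x`, and `Q` is nonnegative at `x`. Then `x ∈ K` while
`-f x ≥ 0`, which is absurd.

Consequently `f t - 1 ∈ M` for some `t ∈ Σ`. For a large constant `k` the identity
`k² (f + r) - 1 = (k - t)² (f + r) + 2 k (f t - 1) + r t (2 k - t) + (2 k - 1 - t² f)`
shows that `f + r ∈ M` with `r ≥ 0` implies `f + r - 1 / k² ∈ M`. Starting from some
`f + N ∈ M`, finitely many such steps give `f ∈ M`.
-/

open MvPolynomial

/-- A polynomial is a sum of squares. -/
def IsSOS {n : ℕ} (p : MvPolynomial (Fin n) ℝ) : Prop :=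
  ∃ (k : ℕ) (f : Fin k → MvPolynomial (Fin n) ℝ), p = ∑ i, f i ^ 2

/-- The basic semialgebraic set defined by `g₁ ≥ 0, …, g_m ≥ 0` satisfies the Archimedean
condition: `r² − ‖x‖²` has a weighted SOS representation with weights `1, g₁, …, g_m`. -/
def Archimedean' {n m : ℕ} (g : Fin m → MvPolynomial (Fin n) ℝ) : Prop :=
  ∃ (σ₀ : MvPolynomial (Fin n) ℝ) (σ : Fin m → MvPolynomial (Fin n) ℝ) (r : ℝ),
    IsSOS σ₀ ∧ (∀ i, IsSOS (σ i)) ∧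
    C (r ^ 2) - ∑ j, X j ^ 2 = σ₀ + ∑ i, g i * σ i

/-! ### Quadratic modules -/

/-- A quadratic module of a commutative ring: contains `1`, closed under addition and under
multiplication by squares. Properness (`-1 ∉ Q`) is not required. -/
structure IsQuadraticModule {A : Type*} [CommRing A] (Q : Set A) : Prop where
  one_mem : 1 ∈ Q
  add_mem : ∀ {a b}, a ∈ Q → b ∈ Q → a + b ∈ Q
  sq_mul_mem : ∀ p {a}, a ∈ Q → p ^ 2 * a ∈ Q

namespace IsQuadraticModule

variable {A : Type*} [CommRing A] {Q : Set A}

theorem sq_mem (h : IsQuadraticModule Q) (p : A) : p ^ 2 ∈ Q := by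
  simpa using h.sq_mul_mem p h.one_mem

theorem zero_mem (h : IsQuadraticModule Q) : (0 : A) ∈ Q := by
  simpa using h.sq_mem 0

theorem sumSq_mul_mem (h : IsQuadraticModule Q) {s a : A} (hs : IsSumSq s) (ha : a ∈ Q) :
    s * a ∈ Q := by
  induction hs with
  | zero => simpa using h.zero_mem
  | sq_add p _ ih =>
    have := h.add_mem (h.sq_mul_mem p ha) ih
    rwa [pow_two, ← add_mul] at this

theorem sumSq_mem (h : IsQuadraticModule Q) {s : A} (hs : IsSumSq s) : s ∈ Q := by
  simpa using h.sumSq_mul_mem hs h.one_mem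

/-- The quadratic module generated by `Q` and `a`. -/
theorem adjoin (h : IsQuadraticModule Q) (a : A) :
    IsQuadraticModule {p | ∃ q ∈ Q, ∃ s, IsSumSq s ∧ p = q + s * a} where
  one_mem := ⟨1, h.one_mem, 0, .zero, by ring⟩
  add_mem := by
    rintro _ _ ⟨q, hq, s, hs, rfl⟩ ⟨q', hq', s', hs', rfl⟩
    exact ⟨q + q', h.add_mem hq hq', s + s', hs.add hs', by ring⟩
  sq_mul_mem := by
    rintro p _ ⟨q, hq, s, hs, rfl⟩
    exact ⟨p ^ 2 * q, h.sq_mul_mem p hq, p ^ 2 * s, (IsSquare.sq p).isSumSq.mul hs, by ring⟩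

variable [Algebra ℝ A]

theorem const_mul_mem (h : IsQuadraticModule Q) {c : ℝ} (hc : 0 ≤ c) {a : A} (ha : a ∈ Q) :
    algebraMap ℝ A c * a ∈ Q := by
  have := h.sq_mul_mem (algebraMap ℝ A (√c)) ha
  rwa [← map_pow, Real.sq_sqrt hc] at this

theorem const_mem (h : IsQuadraticModule Q) {c : ℝ} (hc : 0 ≤ c) : algebraMap ℝ A c ∈ Q := by
  simpa using h.const_mul_mem hc h.one_mem

theorem mem_of_const_mul_mem (h : IsQuadraticModule Q) {c : ℝ} (hc : 0 < c) {a : A}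
    (ha : algebraMap ℝ A c * a ∈ Q) : a ∈ Q := by
  have := h.const_mul_mem (inv_nonneg.2 hc.le) ha
  rwa [← mul_assoc, ← map_mul, inv_mul_cancel₀ hc.ne', map_one, one_mul] at this

theorem mem_of_two_mul_mem (h : IsQuadraticModule Q) {a : A} (ha : 2 * a ∈ Q) : a ∈ Q :=
  h.mem_of_const_mul_mem (c := 2) two_pos (by rwa [map_ofNat])

theorem nonneg_of_const_mem (h : IsQuadraticModule Q) (hp : (-1 : A) ∉ Q) {c : ℝ}
    (hc : algebraMap ℝ A c ∈ Q) : 0 ≤ c := by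
  by_contra! hlt
  refine hp (h.mem_of_const_mul_mem (c := -c) (by linarith) ?_)
  simpa using hc

theorem const_sub_mem_mono (h : IsQuadraticModule Q) {c d : ℝ} (hcd : c ≤ d) {a : A}
    (ha : algebraMap ℝ A c - a ∈ Q) : algebraMap ℝ A d - a ∈ Q := by
  have := h.add_mem ha (h.const_mem (sub_nonneg.2 hcd))
  rw [map_sub] at this
  convert this using 1; ring

/-! ### Maximal proper quadratic modules -/

/-- The support `Q ∩ -Q` is an ideal, since it is closed under multiplication by squares and
`4 b = (b + 1)² - (b - 1)²`. -/
theorem mul_mem_of_mem_support (h : IsQuadraticModule Q) {s : A} (hs : s ∈ Q) (hs' : -s ∈ Q)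
    (b : A) : s * b ∈ Q := by
  have := h.add_mem (h.sq_mul_mem (b + 1) hs) (h.sq_mul_mem (b - 1) hs')
  refine h.mem_of_two_mul_mem (h.mem_of_two_mul_mem ?_)
  convert this using 1; ring

/-- Zorn's lemma gives a maximal proper `P ⊇ Q`, and maximality forces `P ∪ -P = A`. -/
theorem exists_total (h : IsQuadraticModule Q) (hp : (-1 : A) ∉ Q) :
    ∃ P, IsQuadraticModule P ∧ (-1 : A) ∉ P ∧ Q ⊆ P ∧ ∀ a, a ∈ P ∨ -a ∈ P := by
  obtain ⟨P, hQP, hmax⟩ := zorn_subset_nonempty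
    {P : Set A | IsQuadraticModule P ∧ (-1 : A) ∉ P} (by
      intro c hc hchain hne
      refine ⟨⋃₀ c, ⟨⟨?_, ?_, ?_⟩, ?_⟩, fun s hs => Set.subset_sUnion_of_mem hs⟩
      · obtain ⟨s, hs⟩ := hne
        exact ⟨s, hs, (hc hs).1.one_mem⟩
      · rintro a b ⟨s, hs, ha⟩ ⟨t, ht, hb⟩
        rcases hchain.total hs ht with hst | hst
        · exact ⟨t, ht, (hc ht).1.add_mem (hst ha) hb⟩
        · exact ⟨s, hs, (hc hs).1.add_mem ha (hst hb)⟩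
      · rintro p a ⟨s, hs, ha⟩
        exact ⟨s, hs, (hc hs).1.sq_mul_mem p ha⟩
      · rintro ⟨s, hs, ha⟩
        exact (hc hs).2 ha) Q ⟨h, hp⟩
  obtain ⟨⟨hP, hPp⟩, hPmax⟩ := hmax
  have key : ∀ a, a ∉ P → ∃ q ∈ P, ∃ s, IsSumSq s ∧ (-1 : A) = q + s * a := by
    intro a ha
    by_contra hcon
    refine ha (hPmax (y := {p | ∃ q ∈ P, ∃ s, IsSumSq s ∧ p = q + s * a})
      ⟨hP.adjoin a, hcon⟩ (fun q hq => ⟨q, hq, 0, .zero, by ring⟩)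
      ⟨0, hP.zero_mem, 1, .one, by ring⟩)
  refine ⟨P, hP, hPp, hQP, fun a => ?_⟩
  by_contra! hcon
  obtain ⟨q, hq, s, hs, e⟩ := key a hcon.1
  obtain ⟨q', hq', s', hs', e'⟩ := key (-a) hcon.2
  -- Eliminating `a` shows `-(s + s') ∈ P`, so `s` lies in the support of `P`.
  have hneg : -s ∈ P := by
    have := hP.add_mem (hP.add_mem (hP.sumSq_mul_mem hs' hq) (hP.sumSq_mul_mem hs hq'))
      (hP.sumSq_mem hs')
    convert this using 1
    linear_combination s' * e + s * e'
  apply hPp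
  rw [e]
  exact hP.add_mem hq (hP.mul_mem_of_mem_support (hP.sumSq_mem hs) hneg a)

end IsQuadraticModule

/-! ### Infinitesimals and standard parts -/

/-- `a` is infinitesimal with respect to `Q`: `-ε ≤ a ≤ ε` for all real `ε > 0`, in the order
defined by `Q`. -/
def IsInfinitesimal {A : Type*} [CommRing A] [Algebra ℝ A] (Q : Set A) (a : A) : Prop :=
  ∀ ε : ℝ, 0 < ε → algebraMap ℝ A ε - a ∈ Q ∧ algebraMap ℝ A ε + a ∈ Q

/-- Every element is bounded above (hence also below) by a constant in the order defined
by `Q`. -/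
def IsArchimedeanModule {A : Type*} [CommRing A] [Algebra ℝ A] (Q : Set A) : Prop :=
  ∀ a : A, ∃ N : ℝ, algebraMap ℝ A N - a ∈ Q

namespace IsInfinitesimal

variable {A : Type*} [CommRing A] [Algebra ℝ A] {Q : Set A}

theorem neg {a : A} (ha : IsInfinitesimal Q a) : IsInfinitesimal Q (-a) := by
  intro ε hε
  have := ha ε hε
  rw [sub_neg_eq_add, ← sub_eq_add_neg]
  exact this.symm

theorem add (h : IsQuadraticModule Q) {a b : A} (ha : IsInfinitesimal Q a)
    (hb : IsInfinitesimal Q b) : IsInfinitesimal Q (a + b) := by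
  intro ε hε
  have e : algebraMap ℝ A ε = algebraMap ℝ A (ε / 2) + algebraMap ℝ A (ε / 2) := by
    rw [← map_add, add_halves]
  have h1 := ha (ε / 2) (half_pos hε)
  have h2 := hb (ε / 2) (half_pos hε)
  rw [e]
  constructor
  · convert h.add_mem h1.1 h2.1 using 1; ring
  · convert h.add_mem h1.2 h2.2 using 1; ring

theorem const_mul_of_pos (h : IsQuadraticModule Q) {a : A} (ha : IsInfinitesimal Q a) {c : ℝ}
    (hc : 0 < c) : IsInfinitesimal Q (algebraMap ℝ A c * a) := by
  intro ε hε
  have e : algebraMap ℝ A ε = algebraMap ℝ A c * algebraMap ℝ A (ε / c) := by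
    rw [← map_mul, mul_div_cancel₀ _ hc.ne']
  have h1 := ha (ε / c) (div_pos hε hc)
  rw [e, ← mul_sub, ← mul_add]
  exact ⟨h.const_mul_mem hc.le h1.1, h.const_mul_mem hc.le h1.2⟩

theorem zero (h : IsQuadraticModule Q) : IsInfinitesimal Q (0 : A) := fun ε hε => by
  simpa using h.const_mem hε.le

theorem const_mul (h : IsQuadraticModule Q) {a : A} (ha : IsInfinitesimal Q a) (c : ℝ) :
    IsInfinitesimal Q (algebraMap ℝ A c * a) := by
  rcases lt_trichotomy c 0 with hc | rfl | hc
  · simpa using (ha.const_mul_of_pos h (neg_pos.2 hc)).neg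
  · simpa using zero h
  · exact ha.const_mul_of_pos h hc

theorem sq (h : IsQuadraticModule Q) {a : A} (ha : IsInfinitesimal Q a) :
    IsInfinitesimal Q (a ^ 2) := by
  intro δ hδ
  refine ⟨?_, h.add_mem (h.const_mem hδ.le) (h.sq_mem a)⟩
  have hε : 0 < min δ 1 := lt_min hδ one_pos
  refine h.const_sub_mem_mono (min_le_left δ 1) ?_
  have h1 := ha _ hε
  have h2 := h.add_mem (h.sq_mul_mem (1 - a) h1.2) (h.sq_mul_mem (1 + a) h1.1)
  have h3 := h.const_mul_mem (sub_nonneg.2 (min_le_right δ 1)) (h.sq_mem a)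
  refine h.mem_of_two_mul_mem ?_
  convert h.add_mem h2 (h.add_mem h3 h3) using 1
  rw [map_sub, map_one]
  ring

theorem mul (h : IsQuadraticModule Q) {a b : A} (ha : IsInfinitesimal Q a)
    (hb : IsInfinitesimal Q b) : IsInfinitesimal Q (a * b) := by
  have h1 := ((ha.add h hb).sq h).add h ((ha.add h hb.neg).sq h).neg
  have h2 := h1.const_mul h (1 / 4)
  have e : algebraMap ℝ A (1 / 4) * 4 = 1 := by
    rw [← map_ofNat (algebraMap ℝ A) 4, ← map_mul]; norm_num
  convert h2 using 1
  linear_combination (-a * b) * e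

/-- Every element has a standard part, namely the supremum of the constants below it. -/
theorem exists_sub_const (h : IsQuadraticModule Q) (hp : (-1 : A) ∉ Q)
    (htot : ∀ a, a ∈ Q ∨ -a ∈ Q) (harch : IsArchimedeanModule Q) (a : A) :
    ∃ r : ℝ, IsInfinitesimal Q (a - algebraMap ℝ A r) := by
  set S : Set ℝ := {r | a - algebraMap ℝ A r ∈ Q}
  obtain ⟨N, hN⟩ := harch a
  obtain ⟨N', hN'⟩ := harch (-a)
  have hne : S.Nonempty := ⟨-N', by
    change _ - _ ∈ Q; rw [map_neg]; convert hN' using 1; ring⟩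
  have hbdd : BddAbove S := ⟨N, fun r hr => by
    have := h.nonneg_of_const_mem hp (c := N - r) (by
      rw [map_sub]; convert h.add_mem hN hr using 1; ring)
    linarith⟩
  refine ⟨sSup S, fun ε hε => ⟨?_, ?_⟩⟩
  · have hnot : sSup S + ε ∉ S := fun hmem => by linarith [le_csSup hbdd hmem]
    have := (htot (a - algebraMap ℝ A (sSup S + ε))).resolve_left hnot
    rw [map_add] at this
    convert this using 1; ring
  · obtain ⟨r, hr, hlt⟩ := exists_lt_of_lt_csSup hne (sub_lt_self (sSup S) hε)
    have := h.add_mem hr (h.const_mem (c := r - (sSup S - ε)) (by linarith))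
    rw [map_sub, map_sub] at this
    convert this using 1; ring

end IsInfinitesimal

/-- A total proper Archimedean quadratic module of the polynomial ring is nonnegative at some
point. -/
theorem exists_eval_nonneg_of_total {n : ℕ} {Q : Set (MvPolynomial (Fin n) ℝ)}
    (h : IsQuadraticModule Q) (hp : -1 ∉ Q) (htot : ∀ a, a ∈ Q ∨ -a ∈ Q)
    (harch : IsArchimedeanModule Q) : ∃ x : Fin n → ℝ, ∀ p ∈ Q, 0 ≤ eval x p := by
  choose x hx using fun j : Fin n =>
    IsInfinitesimal.exists_sub_const h hp htot harch (X j)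
  have key : ∀ p, IsInfinitesimal Q (p - algebraMap ℝ _ (eval x p)) := by
    intro p
    induction p using MvPolynomial.induction_on with
    | C c => simpa [MvPolynomial.algebraMap_eq] using IsInfinitesimal.zero h
    | add p q ihp ihq =>
      convert ihp.add h ihq using 1
      rw [map_add, map_add]; ring
    | mul_X p j ih =>
      convert ((ih.mul h (hx j)).add h ((hx j).const_mul h (eval x p))).add h
        (ih.const_mul h (x j)) using 1
      rw [map_mul, map_mul, eval_X]; ring
  refine ⟨x, fun p hpQ => ?_⟩
  by_contra! hlt
  have h1 := (key p (-eval x p / 2) (by linarith)).1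
  have h2 := h.nonneg_of_const_mem hp (c := -eval x p / 2 + eval x p) (by
    rw [map_add]; convert h.add_mem h1 hpQ using 1; ring)
  linarith

/-! ### From a certificate with denominator to membership -/

/-- If `f t - 1 ∈ M` for a sum of squares `t`, then `f ∈ M`: a positive amount can repeatedly be
subtracted from `r` in `f + r ∈ M` as long as `r ≥ 0`. -/
theorem IsQuadraticModule.mem_of_mul_sub_one_mem {A : Type*} [CommRing A] [Algebra ℝ A]
    {M : Set A} (h : IsQuadraticModule M) (harch : IsArchimedeanModule M) {f t : A}
    (ht : IsSumSq t) (hft : f * t - 1 ∈ M) : f ∈ M := by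
  obtain ⟨N₁, hN₁⟩ := harch t
  obtain ⟨N₂, hN₂⟩ := harch (t ^ 2 * f)
  obtain ⟨N, hN⟩ := harch (-f)
  set k : ℝ := |N₁| + |N₂| + 1 with hk
  have hk0 : 0 < k := by positivity
  have hk1 : N₁ ≤ 2 * k := by linarith [le_abs_self N₁, abs_nonneg N₁, abs_nonneg N₂]
  have hk2 : N₂ ≤ 2 * k - 1 := by linarith [le_abs_self N₂, abs_nonneg N₁, abs_nonneg N₂]
  have hm1 := h.const_sub_mem_mono hk1 hN₁
  have hm2 := h.const_sub_mem_mono hk2 hN₂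
  have hmono : ∀ r : ℝ, r ≤ 0 → f + algebraMap ℝ A r ∈ M → f ∈ M := by
    intro r hr hmem
    have := h.add_mem hmem (h.const_mem (neg_nonneg.2 hr))
    rw [map_neg] at this
    convert this using 1; ring
  have hstep : ∀ r : ℝ, 0 ≤ r → f + algebraMap ℝ A r ∈ M →
      f + algebraMap ℝ A (r - 1 / k ^ 2) ∈ M := by
    intro r hr hmem
    refine h.mem_of_const_mul_mem (c := k ^ 2) (by positivity) ?_
    have h1 := h.sq_mul_mem (algebraMap ℝ A k - t) hmem
    have h2 := h.const_mul_mem (c := 2 * k) (by positivity) hft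
    have h3 := h.const_mul_mem hr (h.sumSq_mul_mem ht hm1)
    convert h.add_mem (h.add_mem h1 h2) (h.add_mem h3 hm2) using 1
    have e : algebraMap ℝ A (k ^ 2) * algebraMap ℝ A (r - 1 / k ^ 2)
        = algebraMap ℝ A k ^ 2 * algebraMap ℝ A r - 1 := by
      rw [← map_mul, ← map_pow, ← map_mul, ← map_one (algebraMap ℝ A), ← map_sub]
      congr 1
      field_simp
    rw [mul_add, e, map_pow, map_sub, map_mul, map_ofNat, map_one]
    ring
  have hiter : ∀ j : ℕ, f ∈ M ∨ f + algebraMap ℝ A (N - j * (1 / k ^ 2)) ∈ M := by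
    intro j
    induction j with
    | zero =>
      right
      convert hN using 1
      simp [add_comm]
    | succ j ih =>
      rcases ih with ih | ih
      · exact Or.inl ih
      · rcases le_total (N - j * (1 / k ^ 2)) 0 with hle | hle
        · exact Or.inl (hmono _ hle ih)
        · right
          convert hstep _ hle ih using 3
          push_cast; ring
  obtain ⟨j, hj⟩ := exists_nat_ge (N / (1 / k ^ 2))
  rcases hiter j with hf | hf
  · exact hf
  · refine hmono _ ?_ hf
    rw [div_le_iff₀ (by positivity)] at hj
    linarith

/-! ### The quadratic module generated by the constraints -/

theorem isSOS_iff_isSumSq {n : ℕ} {p : MvPolynomial (Fin n) ℝ} : IsSOS p ↔ IsSumSq p := by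
  constructor
  · rintro ⟨k, f, rfl⟩
    exact IsSumSq.sum fun i _ => (IsSquare.sq (f i)).isSumSq
  · intro hp
    induction hp with
    | zero => exact ⟨0, Fin.elim0, by simp⟩
    | sq_add a _ ih =>
      obtain ⟨k, f, rfl⟩ := ih
      exact ⟨k + 1, Fin.cons a f, by simp [Fin.sum_univ_succ, pow_two]⟩

/-- The quadratic module generated by `g₁, …, g_m`. -/
def putinarModule {n m : ℕ} (g : Fin m → MvPolynomial (Fin n) ℝ) :
    Set (MvPolynomial (Fin n) ℝ) :=
  {f | ∃ (σ₀ : MvPolynomial (Fin n) ℝ) (σ : Fin m → MvPolynomial (Fin n) ℝ),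
      IsSOS σ₀ ∧ (∀ i, IsSOS (σ i)) ∧ f = σ₀ + ∑ i, g i * σ i}

theorem putinarModule_isQuadraticModule {n m : ℕ} (g : Fin m → MvPolynomial (Fin n) ℝ) :
    IsQuadraticModule (putinarModule g) := by
  simp only [putinarModule, isSOS_iff_isSumSq]
  refine ⟨⟨1, 0, .one, fun _ => .zero, by simp⟩, ?_, ?_⟩
  · rintro _ _ ⟨s, σ, hs, hσ, rfl⟩ ⟨s', σ', hs', hσ', rfl⟩
    refine ⟨s + s', σ + σ', hs.add hs', fun i => (hσ i).add (hσ' i), ?_⟩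
    simp only [Pi.add_apply, mul_add, Finset.sum_add_distrib]
    ring
  · rintro p _ ⟨s, σ, hs, hσ, rfl⟩
    have hp : IsSumSq (p ^ 2) := (IsSquare.sq p).isSumSq
    refine ⟨p ^ 2 * s, fun i => p ^ 2 * σ i, hp.mul hs, fun i => hp.mul (hσ i), ?_⟩
    rw [mul_add, Finset.mul_sum]
    congr 1
    exact Finset.sum_congr rfl fun i _ => by ring

theorem mem_putinarModule {n m : ℕ} (g : Fin m → MvPolynomial (Fin n) ℝ) (i : Fin m) :
    g i ∈ putinarModule g := by
  refine ⟨0, Pi.single i 1, isSOS_iff_isSumSq.2 .zero, fun j => isSOS_iff_isSumSq.2 ?_, ?_⟩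
  · by_cases hj : j = i
    · subst hj; simpa using IsSumSq.one
    · simpa [hj] using IsSumSq.zero
  · simp [Pi.single_apply]

/-- The polynomials bounded in absolute value by a constant form a subalgebra, and the
Archimedean condition puts every variable into it. -/
theorem putinarModule_archimedean {n m : ℕ} {g : Fin m → MvPolynomial (Fin n) ℝ}
    (harch : Archimedean' g) : IsArchimedeanModule (putinarModule g) := by
  have h := putinarModule_isQuadraticModule g
  set M := putinarModule g
  obtain ⟨σ₀, σ, r, hσ₀, hσ, e⟩ := harch
  have hr : C (r ^ 2) - ∑ j, X j ^ 2 ∈ M := ⟨σ₀, σ, hσ₀, hσ, e⟩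
  let B : MvPolynomial (Fin n) ℝ → Prop := fun p =>
    ∃ N : ℝ, algebraMap ℝ _ N - p ∈ M ∧ algebraMap ℝ _ N + p ∈ M
  have hBadd : ∀ p q, B p → B q → B (p + q) := by
    rintro p q ⟨N, h1, h2⟩ ⟨N', h1', h2'⟩
    refine ⟨N + N', ?_, ?_⟩
    · convert h.add_mem h1 h1' using 1; rw [map_add]; ring
    · convert h.add_mem h2 h2' using 1; rw [map_add]; ring
  have hBneg : ∀ p, B p → B (-p) := by
    rintro p ⟨N, h1, h2⟩
    exact ⟨N, by rwa [sub_neg_eq_add], by rwa [← sub_eq_add_neg]⟩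
  have hBsq : ∀ p, B p → B (p ^ 2) := by
    rintro p ⟨N₀, h1₀, h2₀⟩
    -- A positive bound is needed in order to divide by `2 N` below.
    obtain ⟨N, hN, h1, h2⟩ : ∃ N : ℝ, 0 < N ∧ algebraMap ℝ _ N - p ∈ M ∧
        algebraMap ℝ _ N + p ∈ M := by
      have hle : N₀ ≤ |N₀| + 1 := by linarith [le_abs_self N₀]
      refine ⟨|N₀| + 1, by positivity, h.const_sub_mem_mono hle h1₀, ?_⟩
      simpa using h.const_sub_mem_mono hle (a := -p) (by simpa using h2₀)
    refine ⟨N ^ 2, ?_, h.add_mem (h.const_mem (by positivity)) (h.sq_mem p)⟩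
    refine h.mem_of_const_mul_mem (c := 2 * N) (by positivity) ?_
    convert h.add_mem (h.sq_mul_mem (algebraMap ℝ _ N - p) h2)
      (h.sq_mul_mem (algebraMap ℝ _ N + p) h1) using 1
    rw [map_mul, map_pow, map_ofNat]; ring
  have hBmul : ∀ p q, B p → B q → B (p * q) := by
    intro p q hp hq
    obtain ⟨N, h1, h2⟩ := hBadd _ _ (hBsq _ (hBadd _ _ hp hq))
      (hBneg _ (hBsq _ (hBadd _ _ hp (hBneg _ hq))))
    have e4 : (algebraMap ℝ (MvPolynomial (Fin n) ℝ)) 4 = 4 := map_ofNat _ 4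
    have e' : (algebraMap ℝ (MvPolynomial (Fin n) ℝ)) 4 * algebraMap ℝ _ (N / 4)
        = algebraMap ℝ _ N := by
      rw [← map_mul]; congr 1; ring
    refine ⟨N / 4, h.mem_of_const_mul_mem (c := 4) (by norm_num) ?_,
      h.mem_of_const_mul_mem (c := 4) (by norm_num) ?_⟩
    · convert h1 using 1
      rw [mul_sub, e', e4]; ring
    · convert h2 using 1
      rw [mul_add, e', e4]; ring
  have hBC : ∀ c : ℝ, B (C c) := fun c => by
    rw [← MvPolynomial.algebraMap_eq]
    refine ⟨|c|, ?_, ?_⟩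
    · rw [← map_sub]; exact h.const_mem (by linarith [le_abs_self c])
    · rw [← map_add]; exact h.const_mem (by linarith [neg_abs_le c])
  have hBX : ∀ j, B (X j) := fun j => by
    have hs : IsSumSq (∑ i ∈ Finset.univ.erase j, (X i : MvPolynomial (Fin n) ℝ) ^ 2) :=
      IsSumSq.sum fun i _ => (IsSquare.sq _).isSumSq
    have hj : C (r ^ 2) - X j ^ 2 ∈ M := by
      convert h.add_mem hr (h.sumSq_mem hs) using 1
      rw [← Finset.add_sum_erase _ _ (Finset.mem_univ j)]; ring
    have e' : 2 * algebraMap ℝ (MvPolynomial (Fin n) ℝ) ((r ^ 2 + 1) / 2)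
        = C (r ^ 2) + 1 := by
      rw [← map_ofNat (algebraMap ℝ (MvPolynomial (Fin n) ℝ)) 2, ← map_mul,
        MvPolynomial.algebraMap_eq, ← map_one (C : ℝ →+* MvPolynomial (Fin n) ℝ), ← map_add]
      congr 1; ring
    -- `r² + 1 ∓ 2 X = (r² - X²) + (X ∓ 1)²`
    refine ⟨(r ^ 2 + 1) / 2, h.mem_of_two_mul_mem ?_, h.mem_of_two_mul_mem ?_⟩
    · convert h.add_mem hj (h.sq_mem (X j - 1)) using 1
      rw [mul_sub, e']; ring
    · convert h.add_mem hj (h.sq_mem (X j + 1)) using 1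
      rw [mul_add, e']; ring
  have hB : ∀ p, B p := fun p =>
    MvPolynomial.induction_on p hBC hBadd fun p j hp => hBmul p _ hp (hBX j)
  exact fun p => (hB p).imp fun N hN => hN.1

/-- **Putinar's Positivstellensatz.** If `K = {x : g i x ≥ 0}` satisfies the Archimedean
condition and `f > 0` on `K`, then `f = σ₀ + ∑ i, g i * σ i` for SOS polynomials `σ_i`. -/
theorem putinar_positivstellensatz {n m : ℕ} (g : Fin m → MvPolynomial (Fin n) ℝ)
    (harch : Archimedean' g) (f : MvPolynomial (Fin n) ℝ)
    (hf : ∀ x : Fin n → ℝ, (∀ i, 0 ≤ eval x (g i)) → 0 < eval x f) :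
    ∃ (σ₀ : MvPolynomial (Fin n) ℝ) (σ : Fin m → MvPolynomial (Fin n) ℝ),
      IsSOS σ₀ ∧ (∀ i, IsSOS (σ i)) ∧ f = σ₀ + ∑ i, g i * σ i := by
  change f ∈ putinarModule g
  have h := putinarModule_isQuadraticModule g
  have hM := putinarModule_archimedean harch
  by_cases hcert : (-1 : MvPolynomial (Fin n) ℝ) ∈
      {p | ∃ q ∈ putinarModule g, ∃ s, IsSumSq s ∧ p = q + s * (-f)}
  · obtain ⟨q, hq, t, ht, e⟩ := hcert
    refine h.mem_of_mul_sub_one_mem hM ht ?_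
    convert hq using 1
    linear_combination e
  · exfalso
    obtain ⟨Q, hQ, hQp, hsub, htot⟩ := (h.adjoin (-f)).exists_total hcert
    have hMQ : putinarModule g ⊆ Q := fun q hq => hsub ⟨q, hq, 0, .zero, by ring⟩
    obtain ⟨x, hx⟩ := exists_eval_nonneg_of_total hQ hQp htot
      fun a => (hM a).imp fun N hN => hMQ hN
    have h1 := hf x fun i => hx _ (hMQ (mem_putinarModule g i))
    have h2 := hx (-f) (hsub ⟨0, h.zero_mem, 1, .one, by ring⟩)
    rw [map_neg] at h2
    linarith
end

section
/- Let α, β, γ be partitions of n with γ finer than β (γ ⊏ β), β finer than α (β ⊏ α), and α = {α_1,α_2} consisting of exactly two blocks, and let 1 = {1,…,1} denote the unit partition of n. Then FW^n_{1,2} ⊆ FW^n_{γ,2} ⊆ FW^n_{β,2} ⊆ FW^n_{α,2} = S^n_+ = (FW^n_{α,2})^* ⊆ (FW^n_{β,2})^* ⊆ (FW^n_{γ,2})^* ⊆ (FW^n_{1,2})^*. -/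
/-!
Each summand `Eᵀ X E` of a member of `FW N α` is a positive semidefinite matrix whose support lies
in two blocks of `α` (`summand_psd`, `pairSel_eq_zero`). Conversely a positive semidefinite matrix
`Y` with this support equals `Eᵀ (E Y Eᵀ) E`, because `Eᵀ E` acts as the identity on the two
blocks, so it belongs to `FW N α` (`mem_FW_of_support`). Hence `FW N α` consists of the finite sums
of positive semidefinite matrices supported on two blocks. If every block of a partition lies in
a block of another one, two fine blocks lie in at most two coarse blocks, and the cones are
nested (`FW_mono`). With only two blocks the support condition is void, so the cone is the whole
positive semidefinite cone, which is self-dual (`psd_eq_dualCone`). Dual cones reverse inclusions.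
-/

open Finset Matrix

/-- The block 0/1 matrix `E_{ij,α} = [E_{i,α}; E_{j,α}] ∈ R^{(α_i+α_j) × N}` stacking the
rows selecting the `i`-th and `j`-th consecutive index blocks of the partition `α`. -/
def pairSel (R : Type*) [Zero R] [One R] (N : ℕ) {p : ℕ} (α : Fin p → ℕ) (i j : Fin p) :
    Matrix (Fin (α i + α j)) (Fin N) R :=
  Matrix.of fun a b =>
    if ((a : ℕ) < α i ∧ (b : ℕ) = (∑ l ∈ Finset.Iio i, α l) + (a : ℕ)) ∨
        (α i ≤ (a : ℕ) ∧ (b : ℕ) = (∑ l ∈ Finset.Iio j, α l) + ((a : ℕ) - α i)) then 1 else 0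

/-- The cone `FW^N_{α,2}` of block factor-width-two matrices with respect to the
partition `α` of `N`. -/
def FW (N : ℕ) {p : ℕ} (α : Fin p → ℕ) : Set (Matrix (Fin N) (Fin N) ℝ) :=
  {Z | ∃ X : (i : Fin p) → (j : Fin p) → Matrix (Fin (α i + α j)) (Fin (α i + α j)) ℝ,
        (∀ i j, i < j → (X i j).PosSemidef) ∧
        Z = ∑ i, ∑ j, if i < j then (pairSel ℝ N α i j)ᵀ * X i j * pairSel ℝ N α i j else 0}

/-- The dual cone of `K` within `S^N` with respect to the trace inner product. -/
def dualCone (N : ℕ) (K : Set (Matrix (Fin N) (Fin N) ℝ)) :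
    Set (Matrix (Fin N) (Fin N) ℝ) :=
  {X | X.IsSymm ∧ ∀ Z ∈ K, 0 ≤ Matrix.trace (X * Z)}

/-- `fine ⊑ coarse`: the partition `fine` refines the partition `coarse`, i.e. every block
of `coarse` is a sum of consecutive blocks of `fine`. -/
def IsFinerThan {q p : ℕ} (fine : Fin q → ℕ) (coarse : Fin p → ℕ) : Prop :=
  ∃ m : Fin (p + 1) → ℕ, StrictMono m ∧ m 0 = 0 ∧ m (Fin.last p) = q ∧
    ∀ i : Fin p, coarse i =
      ∑ j ∈ Finset.univ.filter (fun j : Fin q => m i.castSucc ≤ (j : ℕ) ∧ (j : ℕ) < m i.succ),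
        fine j

/-! ### Offsets, blocks and refinement -/

/-- The sum of the first `k` block sizes, i.e. the offset of block `k`. -/
def prefixSum {p : ℕ} (α : Fin p → ℕ) (k : ℕ) : ℕ :=
  ∑ j ∈ Finset.univ.filter (fun j : Fin p => (j : ℕ) < k), α j

/-- Membership of a (zero-based) index `b` in the `i`-th consecutive block of `α`. -/
def InBlock {p : ℕ} (α : Fin p → ℕ) (i : Fin p) (b : ℕ) : Prop :=
  prefixSum α i ≤ b ∧ b < prefixSum α i + α i

lemma sum_Iio_eq_prefixSum {p : ℕ} (α : Fin p → ℕ) (i : Fin p) :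
    ∑ l ∈ Finset.Iio i, α l = prefixSum α i := by
  unfold prefixSum
  congr 1
  ext j
  simp only [Finset.mem_Iio, Finset.mem_filter, Finset.mem_univ, true_and, Fin.lt_def]

lemma prefixSum_zero {p : ℕ} (α : Fin p → ℕ) : prefixSum α 0 = 0 := by
  simp [prefixSum]

lemma prefixSum_mono {p : ℕ} (α : Fin p → ℕ) : Monotone (prefixSum α) := by
  intro k l hkl
  refine Finset.sum_le_sum_of_subset fun j hj => ?_
  simp only [Finset.mem_filter, Finset.mem_univ, true_and] at hj ⊢
  omega

lemma prefixSum_top {p : ℕ} (α : Fin p → ℕ) : prefixSum α p = ∑ i, α i := by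
  simp [prefixSum]

lemma prefixSum_split {p : ℕ} (α : Fin p → ℕ) {k l : ℕ} (hkl : k ≤ l) :
    prefixSum α l = prefixSum α k +
      ∑ j ∈ Finset.univ.filter (fun j : Fin p => k ≤ (j : ℕ) ∧ (j : ℕ) < l), α j := by
  unfold prefixSum
  rw [← Finset.sum_union]
  · congr 1
    ext j
    simp only [Finset.mem_filter, Finset.mem_univ, true_and, Finset.mem_union]
    omega
  · rw [Finset.disjoint_left]
    intro j hj hj'
    simp only [Finset.mem_filter, Finset.mem_univ, true_and] at hj hj'
    omega

lemma prefixSum_succ {p : ℕ} (α : Fin p → ℕ) (i : Fin p) :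
    prefixSum α ((i : ℕ) + 1) = prefixSum α i + α i := by
  rw [prefixSum_split α (Nat.le_succ (i : ℕ))]
  congr 1
  have : (Finset.univ.filter
      (fun j : Fin p => (i : ℕ) ≤ (j : ℕ) ∧ (j : ℕ) < (i : ℕ) + 1)) = {i} := by
    ext j
    simp only [Finset.mem_filter, Finset.mem_univ, true_and, Finset.mem_singleton, Fin.ext_iff]
    omega
  rw [this, Finset.sum_singleton]

lemma exists_step (g : ℕ → ℕ) (h0 : g 0 = 0) (p x : ℕ) (hx : x < g p) :
    ∃ k < p, g k ≤ x ∧ x < g (k + 1) := by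
  induction p with
  | zero => omega
  | succ p ih =>
    by_cases h : x < g p
    · obtain ⟨k, hk, hk'⟩ := ih h
      exact ⟨k, by omega, hk'⟩
    · exact ⟨p, by omega, by omega, hx⟩

lemma exists_inBlock {p N : ℕ} (α : Fin p → ℕ) (hsum : ∑ i, α i = N) (b : ℕ) (hb : b < N) :
    ∃ i, InBlock α i b := by
  obtain ⟨k, hk, h1, h2⟩ := exists_step (prefixSum α) (prefixSum_zero α) p b
    (by rw [prefixSum_top, hsum]; exact hb)
  refine ⟨⟨k, hk⟩, h1, ?_⟩
  rw [← prefixSum_succ α ⟨k, hk⟩]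
  exact h2

lemma prefixSum_unit (n : ℕ) (i : ℕ) (hi : i ≤ n) :
    prefixSum (fun _ : Fin n => 1) i = i := by
  induction i with
  | zero => exact prefixSum_zero _
  | succ i ih =>
    have := prefixSum_succ (fun _ : Fin n => 1) ⟨i, by omega⟩
    simp only at this
    rw [this, ih (by omega)]

lemma unit_block_subset {p n : ℕ} (α : Fin p → ℕ) (hsum : ∑ i, α i = n) (j : Fin n) :
    ∃ i, ∀ b, InBlock (fun _ : Fin n => 1) j b → InBlock α i b := by
  obtain ⟨i, hi⟩ := exists_inBlock α hsum j j.2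
  refine ⟨i, fun b hb => ?_⟩
  unfold InBlock at hb
  simp only [prefixSum_unit n j j.2.le] at hb
  have : b = j := by omega
  rwa [this]

/-- The boundary indices `m` of a refinement match the offsets of the coarse partition. -/
lemma prefixSum_refine {q p : ℕ} (fine : Fin q → ℕ) (coarse : Fin p → ℕ) (m : Fin (p + 1) → ℕ)
    (hm : StrictMono m) (h0 : m 0 = 0)
    (hc : ∀ i : Fin p, coarse i =
      ∑ j ∈ Finset.univ.filter (fun j : Fin q => m i.castSucc ≤ (j : ℕ) ∧ (j : ℕ) < m i.succ),
        fine j) (k : Fin (p + 1)) :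
    prefixSum coarse k = prefixSum fine (m k) := by
  induction k using Fin.induction with
  | zero => rw [h0, Fin.val_zero, prefixSum_zero, prefixSum_zero]
  | succ i ih =>
    rw [Fin.val_succ, prefixSum_succ, prefixSum_split fine (hm (Fin.castSucc_lt_succ (i := i))).le,
      ← hc, ← ih, Fin.val_castSucc]

lemma IsFinerThan.block_subset {q p : ℕ} {fine : Fin q → ℕ} {coarse : Fin p → ℕ}
    (h : IsFinerThan fine coarse) (j : Fin q) :
    ∃ i, ∀ b, InBlock fine j b → InBlock coarse i b := by
  obtain ⟨m, hm, h0, hl, hc⟩ := h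
  have key := prefixSum_refine fine coarse m hm h0 hc
  obtain ⟨k, hk, h1, h2⟩ := exists_step (fun k => if h : k < p + 1 then m ⟨k, h⟩ else 0)
    (by simpa using h0) p j (by
      have : m ⟨p, p.lt_succ_self⟩ = q := hl
      simp [this])
  rw [dif_pos (by omega)] at h1 h2
  refine ⟨⟨k, hk⟩, fun b hb => ?_⟩
  have k1 := key ⟨k, by omega⟩
  have k2 := key ⟨k + 1, by omega⟩
  have k3 := prefixSum_succ coarse ⟨k, hk⟩
  have k4 := prefixSum_succ fine j
  have k5 := prefixSum_mono fine h1
  have k6 := prefixSum_mono fine (Nat.succ_le_of_lt h2)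
  unfold InBlock at hb ⊢
  simp only [Nat.succ_eq_add_one] at *
  omega

/-! ### The selection matrices -/

lemma pairSel_apply {N p : ℕ} (α : Fin p → ℕ) (i j : Fin p) (a : Fin (α i + α j)) (b : Fin N) :
    pairSel ℝ N α i j a b =
      if ((a : ℕ) < α i ∧ (b : ℕ) = prefixSum α i + (a : ℕ)) ∨
        (α i ≤ (a : ℕ) ∧ (b : ℕ) = prefixSum α j + ((a : ℕ) - α i)) then 1 else 0 := by
  simp only [pairSel, Matrix.of_apply, sum_Iio_eq_prefixSum]

lemma pairSel_eq_zero {N p : ℕ} (α : Fin p → ℕ) (i j : Fin p) (a : Fin (α i + α j)) (b : Fin N)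
    (hi : ¬ InBlock α i b) (hj : ¬ InBlock α j b) : pairSel ℝ N α i j a b = 0 := by
  rw [pairSel_apply, if_neg]
  unfold InBlock at hi hj
  omega

/-- The rows of `Eᵀ E` in the two selected blocks are those of the identity. Since the blocks are
disjoint (from `i < j`), each such index is selected by exactly one row of `E`. -/
lemma pairSel_transpose_mul {N p : ℕ} (α : Fin p → ℕ) (i j : Fin p) (hij : i < j) (b b' : Fin N)
    (hb : InBlock α i b ∨ InBlock α j b) :
    ((pairSel ℝ N α i j)ᵀ * pairSel ℝ N α i j) b b' = (1 : Matrix (Fin N) (Fin N) ℝ) b b' := by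
  have hd : prefixSum α i + α i ≤ prefixSum α j := by
    rw [← prefixSum_succ]; exact prefixSum_mono α hij
  have hex : ∃ a : Fin (α i + α j), ∀ a' : Fin (α i + α j),
      pairSel ℝ N α i j a' b = if a' = a then 1 else 0 := by
    simp only [pairSel_apply]
    unfold InBlock at hb
    rcases hb with hb | hb
    · refine ⟨⟨b - prefixSum α i, by omega⟩, fun a' => ?_⟩
      refine if_congr ?_ rfl rfl
      rw [Fin.ext_iff]
      simp only
      omega
    · refine ⟨⟨α i + (b - prefixSum α j), by omega⟩, fun a' => ?_⟩
      refine if_congr ?_ rfl rfl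
      rw [Fin.ext_iff]
      simp only
      omega
  obtain ⟨a, ha⟩ := hex
  simp only [Matrix.mul_apply, Matrix.transpose_apply, ha, ite_mul, one_mul, zero_mul,
    Finset.sum_ite_eq', Finset.mem_univ, if_true, Matrix.one_apply]
  have h1 := ha a
  rw [if_pos rfl, pairSel_apply] at h1
  have h2 : ((a : ℕ) < α i ∧ (b : ℕ) = prefixSum α i + (a : ℕ)) ∨
        (α i ≤ (a : ℕ) ∧ (b : ℕ) = prefixSum α j + ((a : ℕ) - α i)) := by
    by_contra h
    rw [if_neg h] at h1
    exact zero_ne_one h1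
  rw [pairSel_apply]
  refine if_congr ?_ rfl rfl
  rw [Fin.ext_iff]
  omega

/-! ### The cone as sums of matrices supported on two blocks -/

lemma zero_mem_FW (N : ℕ) {p : ℕ} (α : Fin p → ℕ) : (0 : Matrix (Fin N) (Fin N) ℝ) ∈ FW N α :=
  ⟨fun _ _ => 0, fun _ _ _ => Matrix.PosSemidef.zero, by simp⟩

lemma add_mem_FW {N p : ℕ} {α : Fin p → ℕ} {Y Z : Matrix (Fin N) (Fin N) ℝ}
    (hY : Y ∈ FW N α) (hZ : Z ∈ FW N α) : Y + Z ∈ FW N α := by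
  obtain ⟨X, hX, rfl⟩ := hY
  obtain ⟨X', hX', rfl⟩ := hZ
  refine ⟨fun i j => X i j + X' i j, fun i j h => (hX i j h).add (hX' i j h), ?_⟩
  simp only [← Finset.sum_add_distrib]
  refine Finset.sum_congr rfl fun i _ => Finset.sum_congr rfl fun j _ => ?_
  split_ifs
  · rw [Matrix.mul_add, Matrix.add_mul]
  · rw [add_zero]

lemma sum_mem_FW {N p : ℕ} {α : Fin p → ℕ} {ι : Type*} (s : Finset ι)
    (f : ι → Matrix (Fin N) (Fin N) ℝ) (hf : ∀ i ∈ s, f i ∈ FW N α) : ∑ i ∈ s, f i ∈ FW N α :=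
  Finset.sum_induction f (· ∈ FW N α) (fun _ _ => add_mem_FW) (zero_mem_FW N α) hf

/-- The summand with coefficient `X = E Y Eᵀ`. A coefficient of this form makes sense for every pair
of blocks, so the family vanishing at all other pairs needs no cast between matrix sizes. -/
lemma single_mem_FW {N p : ℕ} {α : Fin p → ℕ} (i j : Fin p) (hij : i < j)
    (Y : Matrix (Fin N) (Fin N) ℝ) (hY : Y.PosSemidef) :
    (pairSel ℝ N α i j)ᵀ * (pairSel ℝ N α i j * Y * (pairSel ℝ N α i j)ᵀ) * pairSel ℝ N α i j
      ∈ FW N α := by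
  refine ⟨fun i' j' => if i' = i ∧ j' = j then
    pairSel ℝ N α i' j' * Y * (pairSel ℝ N α i' j')ᵀ else 0, fun i' j' _ => ?_, ?_⟩
  · beta_reduce
    split_ifs
    · simpa using hY.mul_mul_conjTranspose_same (pairSel ℝ N α i' j')
    · exact Matrix.PosSemidef.zero
  · rw [Finset.sum_eq_single i, Finset.sum_eq_single j]
    · simp [hij]
    · intro j' _ hj'
      simp [hj']
    · simp
    · intro i' _ hi'
      simp [hi']
    · simp

/-- A positive semidefinite matrix supported on two blocks is a summand of the cone. By symmetry
it suffices to require that the rows outside the two blocks vanish. -/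
lemma mem_FW_of_support {N p : ℕ} {α : Fin p → ℕ} (i j : Fin p) (hij : i < j)
    (Y : Matrix (Fin N) (Fin N) ℝ) (hY : Y.PosSemidef)
    (hs : ∀ a b : Fin N, ¬ InBlock α i a → ¬ InBlock α j a → Y a b = 0) : Y ∈ FW N α := by
  set E := pairSel ℝ N α i j with hE
  have h1 : Eᵀ * E * Y = Y := by
    ext b c
    by_cases hb : InBlock α i b ∨ InBlock α j b
    · rw [Matrix.mul_apply]
      simp only [hE, pairSel_transpose_mul α i j hij b _ hb]
      rw [← Matrix.mul_apply, Matrix.one_mul]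
    · have hb' := not_or.mp hb
      rw [hs b c hb'.1 hb'.2, Matrix.mul_apply]
      refine Finset.sum_eq_zero fun d _ => ?_
      rw [Matrix.mul_apply, Finset.sum_eq_zero, zero_mul]
      intro a _
      rw [Matrix.transpose_apply, hE, pairSel_eq_zero α i j a b hb'.1 hb'.2, zero_mul]
  have hYt : Yᵀ = Y := by simpa using hY.isHermitian.eq
  have h2 : Y * (Eᵀ * E) = Y := by
    have := congrArg Matrix.transpose h1
    simpa [Matrix.transpose_mul, hYt, Matrix.mul_assoc] using this
  have h3 := single_mem_FW (N := N) (α := α) i j hij Y hY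
  have h4 : Eᵀ * (E * Y * Eᵀ) * E = Y := by
    calc Eᵀ * (E * Y * Eᵀ) * E = (Eᵀ * E * Y) * (Eᵀ * E) := by simp only [Matrix.mul_assoc]
      _ = Y := by rw [h1, h2]
  rwa [← hE, h4] at h3

lemma summand_psd {N p : ℕ} {α : Fin p → ℕ} (i j : Fin p)
    (X : Matrix (Fin (α i + α j)) (Fin (α i + α j)) ℝ) (hX : X.PosSemidef) :
    ((pairSel ℝ N α i j)ᵀ * X * pairSel ℝ N α i j).PosSemidef := by
  simpa using hX.conjTranspose_mul_mul_same (pairSel ℝ N α i j)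

lemma FW_mono {N q p : ℕ} {fine : Fin q → ℕ} {coarse : Fin p → ℕ} (hp : 2 ≤ p)
    (h : ∀ j, ∃ i, ∀ b, InBlock fine j b → InBlock coarse i b) : FW N fine ⊆ FW N coarse := by
  rintro Z ⟨X, hX, rfl⟩
  refine sum_mem_FW _ _ fun i _ => sum_mem_FW _ _ fun j _ => ?_
  split_ifs with hij
  swap
  · exact zero_mem_FW N coarse
  obtain ⟨i', hi'⟩ := h i
  obtain ⟨j', hj'⟩ := h j
  -- If both fine blocks lie in one coarse block, any second coarse block completes the pair.
  have hpair : ∃ k l : Fin p, k < l ∧ (i' = k ∨ i' = l) ∧ (j' = k ∨ j' = l) := by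
    rcases lt_trichotomy i' j' with hlt | heq | hgt
    · exact ⟨i', j', hlt, .inl rfl, .inr rfl⟩
    · subst heq
      by_cases h0 : (i' : ℕ) = 0
      · exact ⟨i', ⟨1, by omega⟩, by rw [Fin.lt_def]; simp only; omega, .inl rfl, .inl rfl⟩
      · exact ⟨⟨0, by omega⟩, i', by rw [Fin.lt_def]; simp only; omega, .inr rfl, .inr rfl⟩
    · exact ⟨j', i', hgt, .inr rfl, .inl rfl⟩
  obtain ⟨k, l, hkl, hik, hjl⟩ := hpair
  refine mem_FW_of_support k l hkl _ (summand_psd i j _ (hX i j hij)) fun a b hk hl => ?_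
  have ha : ¬ InBlock fine i a := fun hc => by
    rcases hik with rfl | rfl
    · exact hk (hi' _ hc)
    · exact hl (hi' _ hc)
  have ha' : ¬ InBlock fine j a := fun hc => by
    rcases hjl with rfl | rfl
    · exact hk (hj' _ hc)
    · exact hl (hj' _ hc)
  rw [Matrix.mul_assoc, Matrix.mul_apply]
  refine Finset.sum_eq_zero fun d _ => ?_
  rw [Matrix.transpose_apply, pairSel_eq_zero fine i j d a ha ha', zero_mul]

lemma FW_subset_psd {N p : ℕ} (α : Fin p → ℕ) :
    FW N α ⊆ {Z : Matrix (Fin N) (Fin N) ℝ | Z.PosSemidef} := by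
  rintro Z ⟨X, hX, rfl⟩
  refine Matrix.posSemidef_sum _ fun i _ => Matrix.posSemidef_sum _ fun j _ => ?_
  split_ifs with hij
  · exact summand_psd i j _ (hX i j hij)
  · exact Matrix.PosSemidef.zero

lemma FW_two_eq_psd {n : ℕ} (α : Fin 2 → ℕ) (hsum : ∑ i, α i = n) :
    FW n α = {Z : Matrix (Fin n) (Fin n) ℝ | Z.PosSemidef} := by
  refine Set.Subset.antisymm (FW_subset_psd α) fun Z hZ => ?_
  refine mem_FW_of_support 0 1 (by decide) Z hZ fun a b h0 h1 => ?_
  obtain ⟨i, hi⟩ := exists_inBlock α hsum a a.2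
  fin_cases i
  · exact absurd hi h0
  · exact absurd hi h1

/-! ### Duality -/

/-- Self-duality of the positive semidefinite cone: it is generated by the rank-one matrices
`x xᵀ`, and `tr (X x xᵀ) = xᵀ X x`. -/
lemma psd_eq_dualCone (n : ℕ) :
    {Z : Matrix (Fin n) (Fin n) ℝ | Z.PosSemidef} =
      dualCone n {Z : Matrix (Fin n) (Fin n) ℝ | Z.PosSemidef} := by
  ext X
  constructor
  · intro hX
    refine ⟨by simpa [Matrix.IsSymm] using hX.isHermitian.eq, fun Z hZ => ?_⟩
    obtain ⟨m, v, rfl⟩ := Matrix.posSemidef_iff_eq_sum_vecMulVec.mp hZ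
    rw [Matrix.mul_sum, Matrix.trace_sum]
    refine Finset.sum_nonneg fun i _ => ?_
    rw [Matrix.mul_vecMulVec, Matrix.trace_vecMulVec, dotProduct_comm]
    exact hX.dotProduct_mulVec_nonneg (v i)
  · rintro ⟨hs, hX⟩
    refine Matrix.PosSemidef.of_dotProduct_mulVec_nonneg (by simpa [Matrix.IsHermitian, Matrix.IsSymm] using hs)
      fun x => ?_
    have := hX (Matrix.vecMulVec x (star x)) (Matrix.posSemidef_vecMulVec_self_star x)
    rwa [Matrix.mul_vecMulVec, Matrix.trace_vecMulVec, dotProduct_comm] at this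

lemma dualCone_anti {n : ℕ} {K L : Set (Matrix (Fin n) (Fin n) ℝ)} (h : K ⊆ L) :
    dualCone n L ⊆ dualCone n K :=
  fun _ hX => ⟨hX.1, fun Z hZ => hX.2 Z (h hZ)⟩


/-- **Hierarchy of block factor-width-two cones (Zheng–Sootla–Papachristodoulou).**
For partitions `γ ⊏ β ⊏ α` of `n` with `α` consisting of exactly two blocks, and the unit
partition `1`, one has
`FW_{1,2} ⊆ FW_{γ,2} ⊆ FW_{β,2} ⊆ FW_{α,2} = S^n_+ = (FW_{α,2})^* ⊆ (FW_{β,2})^* ⊆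
(FW_{γ,2})^* ⊆ (FW_{1,2})^*`. -/
theorem block_factor_width_two_hierarchy {n pβ pγ : ℕ}
    (α : Fin 2 → ℕ) (β : Fin pβ → ℕ) (γ : Fin pγ → ℕ)
    (hαpos : ∀ i, 0 < α i) (hβpos : ∀ i, 0 < β i) (hγpos : ∀ i, 0 < γ i)
    (hαsum : ∑ i, α i = n) (hβsum : ∑ i, β i = n) (hγsum : ∑ i, γ i = n)
    (hβα : IsFinerThan β α) (hβlen : 2 < pβ)
    (hγβ : IsFinerThan γ β) (hγlen : pβ < pγ) :
    FW n (fun _ : Fin n => 1) ⊆ FW n γ ∧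
    FW n γ ⊆ FW n β ∧
    FW n β ⊆ FW n α ∧
    FW n α = {Z : Matrix (Fin n) (Fin n) ℝ | Z.PosSemidef} ∧
    {Z : Matrix (Fin n) (Fin n) ℝ | Z.PosSemidef} = dualCone n (FW n α) ∧
    dualCone n (FW n α) ⊆ dualCone n (FW n β) ∧
    dualCone n (FW n β) ⊆ dualCone n (FW n γ) ∧
    dualCone n (FW n γ) ⊆ dualCone n (FW n (fun _ : Fin n => 1)) := by
  have h1 : FW n (fun _ : Fin n => 1) ⊆ FW n γ :=
    FW_mono (by omega) (unit_block_subset γ hγsum)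
  have h2 : FW n γ ⊆ FW n β := FW_mono (by omega) hγβ.block_subset
  have h3 : FW n β ⊆ FW n α := FW_mono le_rfl hβα.block_subset
  have h4 := FW_two_eq_psd α hαsum
  exact ⟨h1, h2, h3, h4, by rw [h4]; exact psd_eq_dualCone n,
    dualCone_anti h3, dualCone_anti h2, dualCone_anti h1⟩
end
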